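/- arXiv:math/0311504 — 2 statements merged into one kernel-verified Lean document; each statement's English description precedes it below -/
import Mathlib

section
/- Let u be a Lyndon word and v a nonempty word. Then v ≫ u if and only if v > u^i in the lexicographic order for every positive integer i. -/
/-- A word `u` is a Lyndon word if it is nonempty and lexicographically smaller than
each of its proper nonempty suffixes. -/
def IsLyndon {X : Type*} [LinearOrder X] (u : List X) : Prop :=
  u ≠ [] ∧ ∀ v w : List X, v ≠ [] → w ≠ [] → u = v ++ w → List.Lex (· < ·) u w

/-- `ls` is a Lyndon factorization of `u`: all factors are Lyndon words, the factors are
(lexicographically) nonincreasing, and their concatenation is `u`. -/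
def IsLyndonFactorization {X : Type*} [LinearOrder X] (ls : List (List X)) (u : List X) : Prop :=
  (∀ l ∈ ls, IsLyndon l) ∧ ls.Chain' (fun a b => ¬ List.Lex (· < ·) a b) ∧ ls.flatten = u

/-- `v ≫ u` : the first Lyndon letter of the Lyndon decomposition of `v` is
lexicographically greater than `u`. -/
def MuchGt {X : Type*} [LinearOrder X] (v u : List X) : Prop :=
  ∃ (l : List X) (t : List (List X)),
    IsLyndonFactorization (l :: t) v ∧ List.Lex (· < ·) u l

section LyndonWords

variable {X : Type*} [LinearOrder X]

/-- If `a < b`, then either `a` is a proper prefix of `b`, or `a` and `b` differ at some position,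
in which case the comparison is stable under appending arbitrary words. -/
lemma List.exists_append_or_append_lt_of_lt {a b : List X} (h : a < b) :
    (∃ c, c ≠ [] ∧ b = a ++ c) ∨ ∀ x y : List X, a ++ x < b ++ y := by
  change List.Lex (· < ·) a b at h
  induction h with
  | @nil c s => exact .inl ⟨c :: s, by simp, rfl⟩
  | rel h => exact .inr fun x y => List.Lex.rel h
  | cons h ih =>
    rcases ih with ⟨c, hc, rfl⟩ | ih
    · exact .inl ⟨c, hc, rfl⟩
    · exact .inr fun x y => List.Lex.cons (ih x y)

lemma List.append_lt_append_of_lt_of_length_le {a b : List X} (h : a < b)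
    (hl : b.length ≤ a.length) (x y : List X) : a ++ x < b ++ y := by
  rcases List.exists_append_or_append_lt_of_lt h with ⟨c, hc, rfl⟩ | h
  · have := List.length_pos_iff.2 hc
    rw [List.length_append] at hl
    omega
  · exact h x y

lemma List.append_lt_append_left {a b : List X} (s : List X) (h : a < b) : s ++ a < s ++ b :=
  List.Lex.append_left _ h s

lemma List.append_le_append_left {a b : List X} (s : List X) (h : a ≤ b) : s ++ a ≤ s ++ b := by
  rcases h.eq_or_lt with rfl | h
  · exact le_rfl
  · exact (List.append_lt_append_left s h).le

lemma List.lt_append_of_ne_nil (a : List X) {c : List X} (hc : c ≠ []) : a < a ++ c := by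
  obtain ⟨x, s, rfl⟩ := List.exists_cons_of_ne_nil hc
  simpa using List.append_lt_append_left a (List.Lex.nil : List.Lex (· < ·) [] (x :: s))

lemma List.le_append (a c : List X) : a ≤ a ++ c := by
  rcases eq_or_ne c [] with rfl | hc
  · simp
  · exact (List.lt_append_of_ne_nil a hc).le

lemma isLyndon_singleton (x : X) : IsLyndon [x] := by
  refine ⟨by simp, fun v w hv hw h => ?_⟩
  have h := congrArg List.length h
  have := List.length_pos_iff.2 hv
  have := List.length_pos_iff.2 hw
  simp only [List.length_singleton, List.length_append] at h
  omega

lemma IsLyndon.append_lt_right {a b : List X} (ha : IsLyndon a) (hb : IsLyndon b) (h : a < b) :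
    a ++ b < b := by
  rcases List.exists_append_or_append_lt_of_lt h with ⟨c, hc, rfl⟩ | h
  · exact List.append_lt_append_left a (hb.2 a c ha.1 hc rfl)
  · simpa using h b []

lemma IsLyndon.append {a b : List X} (ha : IsLyndon a) (hb : IsLyndon b) (h : a < b) :
    IsLyndon (a ++ b) := by
  have hlt := ha.append_lt_right hb h
  refine ⟨by simp [ha.1], fun v w hv hw he => ?_⟩
  change a ++ b < w
  rcases List.append_eq_append_iff.1 he with ⟨c, rfl, hc⟩ | ⟨c, hc, rfl⟩
  · rcases eq_or_ne c [] with rfl | hne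
    · simpa [hc] using hlt
    · exact hlt.trans (hb.2 c w hne hw hc)
  · rcases eq_or_ne c [] with rfl | hne
    · simpa using hlt
    · refine List.append_lt_append_of_lt_of_length_le (ha.2 v c hv hne hc) ?_ b b
      simp [hc]

lemma IsLyndon.exists_isLyndonFactorization_append (ls : List (List X)) :
    ∀ {a w : List X}, IsLyndon a → IsLyndonFactorization ls w →
      ∃ ls', IsLyndonFactorization ls' (a ++ w) := by
  induction ls with
  | nil =>
    rintro a w ha ⟨-, -, rfl⟩
    exact ⟨[a], by simpa using ha, List.isChain_singleton _, by simp⟩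
  | cons l t ih =>
    rintro a w ha ⟨hl, hc, rfl⟩
    by_cases h : a < l
    · obtain ⟨ls', h'⟩ := ih (ha.append (hl l (by simp)) h)
        ⟨fun m hm => hl m (by simp [hm]), hc.tail, rfl⟩
      exact ⟨ls', by simpa using h'⟩
    · refine ⟨a :: l :: t, ?_, List.isChain_cons_cons.2 ⟨h, hc⟩, by simp⟩
      intro m hm
      rcases List.mem_cons.1 hm with rfl | hm
      · exact ha
      · exact hl m hm

lemma exists_isLyndonFactorization (v : List X) : ∃ ls, IsLyndonFactorization ls v := by
  induction v with
  | nil => exact ⟨[], by simp, List.isChain_nil, rfl⟩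
  | cons x v ih =>
    obtain ⟨ls, h⟩ := ih
    exact (isLyndon_singleton x).exists_isLyndonFactorization_append ls h

lemma IsLyndonFactorization.le_head {l v : List X} {t : List (List X)}
    (h : IsLyndonFactorization (l :: t) v) : ∀ m ∈ l :: t, m ≤ l := by
  have hc : (l :: t).IsChain (· ≥ ·) := h.2.1.imp fun a b hab => not_lt.1 hab
  intro m hm
  rcases List.mem_cons.1 hm with rfl | hm
  · exact le_rfl
  · exact (List.pairwise_cons.1 hc.pairwise).1 m hm

lemma IsLyndon.flatten_le_flatten_replicate {u : List X} (hu : IsLyndon u) (ls : List (List X))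
    (h : ∀ l ∈ ls, l ≤ u) : ls.flatten ≤ (List.replicate ls.length u).flatten := by
  induction ls with
  | nil => simp
  | cons l t ih =>
    have ih := ih fun m hm => h m (by simp [hm])
    simp only [List.length_cons, List.replicate_succ, List.flatten_cons]
    rcases (h l (by simp)).eq_or_lt with rfl | hlt
    · exact List.append_le_append_left _ ih
    · rcases List.exists_append_or_append_lt_of_lt hlt with ⟨c, hc, rfl⟩ | hlt
      · rcases eq_or_ne l [] with rfl | hl
        · refine ih.trans ?_
          rw [List.nil_append, ← List.flatten_cons, ← List.replicate_succ, List.replicate_succ',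
            List.flatten_append]
          exact List.le_append _ _
        · rw [List.append_assoc]
          refine List.append_le_append_left l (ih.trans ?_)
          refine le_trans ?_ (List.append_lt_append_of_lt_of_length_le
            (hu.2 l c hl hc rfl) (by simp) (List.replicate t.length (l ++ c)).flatten _).le
          rw [← List.flatten_cons, ← List.replicate_succ, List.replicate_succ',
            List.flatten_append]
          exact List.le_append _ _
      · exact (hlt _ _).le

lemma IsLyndon.flatten_replicate_lt {l u : List X} (hl : IsLyndon l) (hu : u ≠ []) (h : u < l)
    (i : ℕ) : (List.replicate i u).flatten < l := by
  induction i with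
  | zero => simpa using List.lt_append_of_ne_nil [] hl.1
  | succ i ih =>
    rw [List.replicate_succ, List.flatten_cons]
    rcases List.exists_append_or_append_lt_of_lt h with ⟨c, hc, rfl⟩ | h
    · exact List.append_lt_append_left u (ih.trans (hl.2 u c hu hc rfl))
    · simpa using h (List.replicate i u).flatten []

end LyndonWords

/-- For a Lyndon word `u` and a nonempty word `v`, `v ≫ u` holds iff `v` is
lexicographically greater than every power `u^i`, `i ≥ 1`. -/
theorem muchGt_iff_gt_pow {X : Type*} [Fintype X] [LinearOrder X]
    (u v : List X) (hu : IsLyndon u) (hv : v ≠ []) :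
    MuchGt v u ↔
      ∀ i : ℕ, 0 < i → List.Lex (· < ·) (List.replicate i u).flatten v := by
  constructor
  · rintro ⟨l, t, ⟨hl, -, rfl⟩, hlt⟩ i -
    exact ((hl l (by simp)).flatten_replicate_lt hu.1 hlt i).append_right _ _
  · intro h
    obtain ⟨_ | ⟨l, t⟩, hf⟩ := exists_isLyndonFactorization v
    · exact absurd hf.2.2.symm hv
    · refine ⟨l, t, hf, ?_⟩
      by_contra hlt
      have hle := hu.flatten_le_flatten_replicate (l :: t) fun m hm =>
        (hf.le_head m hm).trans (not_lt.1 hlt)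
      rw [hf.2.2] at hle
      exact hle.not_gt (h _ (by simp))
end

section
/- Let u be a Lyndon word, i a positive integer, a a word of length i·l(u) with a ≥ u^i in the lexicographic order, and b a word with b ≫ u. Then the concatenation ab satisfies ab ≫ u. -/
namespace LyndonWord

variable {X : Type*} [LinearOrder X]

/-- `x` is smaller than `y` because of a letter: every extension of `x` is smaller than `y`. -/
def LetterLT (x y : List X) : Prop :=
  ∀ s : List X, x ++ s < y

theorem letterLT_or_prefix_of_lt {x y : List X} (h : List.Lex (· < ·) x y) :
    LetterLT x y ∨ ∃ w, w ≠ [] ∧ y = x ++ w := by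
  induction h with
  | nil => exact Or.inr ⟨_, List.cons_ne_nil _ _, rfl⟩
  | cons h ih =>
    rcases ih with ih | ⟨w, hw, rfl⟩
    · exact Or.inl fun s => List.Lex.cons (ih s)
    · exact Or.inr ⟨w, hw, rfl⟩
  | rel h => exact Or.inl fun s => List.Lex.rel h

theorem append_lt_append_left_iff (p : List X) {x y : List X} : p ++ x < p ++ y ↔ x < y := by
  induction p with
  | nil => rfl
  | cons c p ih => simp [ih]

namespace LetterLT

variable {x y : List X}

theorem append_right (h : LetterLT x y) (t : List X) : LetterLT x (y ++ t) :=
  fun s => List.Lex.append_right _ t (h s)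

theorem append_left_iff (p : List X) : LetterLT (p ++ x) (p ++ y) ↔ LetterLT x y :=
  forall_congr' fun s => by rw [List.append_assoc, append_lt_append_left_iff]

theorem not_nil_left : ¬ LetterLT [] y := fun h => lt_irrefl y (h y)

theorem not_nil_right : ¬ LetterLT x [] := fun h => List.not_lt_nil _ (h [])

theorem not_letterLT_append (h : LetterLT x y) (s t : List X) :
    ¬ LetterLT (y ++ s) (x ++ t) :=
  fun h' => lt_asymm (h.append_right s t) (by simpa using h' [])

end LetterLT

theorem letterLT_of_lt_of_length_le {x y : List X} (h : List.Lex (· < ·) x y)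
    (hl : y.length ≤ x.length) : LetterLT x y := by
  rcases letterLT_or_prefix_of_lt h with h | ⟨w, hw, rfl⟩
  · exact h
  · have := List.length_pos_iff.2 hw
    rw [List.length_append] at hl
    omega

/-- A word whose nonempty suffixes all exceed `u` exceeds some power of `u` because of a letter. -/
theorem exists_letterLT_of_lt_suffixes {u : List X} (hu : u ≠ []) (s : List X) (hs : s ≠ [])
    (h : ∀ v w, w ≠ [] → s = v ++ w → u < w) :
    ∃ n, LetterLT (List.replicate n u).flatten s := by
  rcases letterLT_or_prefix_of_lt (h [] s hs rfl) with h' | ⟨w, hw, rfl⟩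
  · exact ⟨1, by simpa using h'⟩
  · have : w.length < (u ++ w).length := by
      have := List.length_pos_iff.2 hu
      rw [List.length_append]
      omega
    obtain ⟨n, hn⟩ := exists_letterLT_of_lt_suffixes hu w hw fun v w' hw' e =>
      h (u ++ v) w' hw' (by rw [e, List.append_assoc])
    refine ⟨n + 1, ?_⟩
    rw [List.replicate_succ, List.flatten_cons]
    exact (LetterLT.append_left_iff u).2 hn
termination_by s.length

theorem exists_letterLT_of_muchGt {u b : List X} (hu : u ≠ []) (hb : MuchGt b u) :
    ∃ n, LetterLT (List.replicate n u).flatten b := by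
  obtain ⟨l, t, ⟨hl, -, rfl⟩, hlt⟩ := hb
  have hl := hl l List.mem_cons_self
  obtain ⟨n, hn⟩ := exists_letterLT_of_lt_suffixes hu l hl.1 fun v w hw e => by
    rcases eq_or_ne v [] with rfl | hv
    · rw [List.nil_append] at e
      exact e ▸ hlt
    · exact lt_trans (show u < l from hlt) (hl.2 v w hv hw e)
  exact ⟨n, hn.append_right _⟩

theorem not_letterLT_flatten_of_forall_le {u : List X} (hu : IsLyndon u) (ls : List (List X))
    (hls : ∀ l ∈ ls, l ≤ u) (n : ℕ) {v w : List X} (hw : u = v ++ w) :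
    ¬ LetterLT (w ++ (List.replicate n u).flatten) ls.flatten := by
  induction ls generalizing n v w with
  | nil => exact LetterLT.not_nil_right
  | cons l t ih =>
    have ht : ∀ l ∈ t, l ≤ u := fun l hl => hls l (List.mem_cons_of_mem _ hl)
    have main : ∀ (n : ℕ) (v w : List X), w ≠ [] → u = v ++ w →
        ¬ LetterLT (w ++ (List.replicate n u).flatten) (l :: t).flatten := by
      intro n v w hw0 hw h
      have huw : u ≤ w := by
        rcases eq_or_ne v [] with rfl | hv
        · exact le_of_eq hw
        · exact le_of_lt (hu.2 v w hv hw0 hw)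
      rw [List.flatten_cons] at h
      have key : ∀ w', w = l ++ w' → False := by
        rintro w' rfl
        rw [List.append_assoc, LetterLT.append_left_iff] at h
        exact ih ht n (v := v ++ l) (by rw [hw, List.append_assoc]) h
      rcases ((hls l List.mem_cons_self).trans huw).eq_or_lt with e | hlt
      · exact key [] (by simp [e])
      · rcases letterLT_or_prefix_of_lt hlt with h' | ⟨w', -, e⟩
        · exact h'.not_letterLT_append _ _ h
        · exact key w' e
    rcases eq_or_ne w [] with rfl | hw0
    · cases n with
      | zero => exact LetterLT.not_nil_left
      | succ n =>
        rw [List.replicate_succ, List.flatten_cons, List.nil_append]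
        exact main n [] u hu.1 rfl
    · exact main n v w hw0 hw

theorem isLyndon_append {l h : List X} (hl : IsLyndon l) (hh : IsLyndon h) (hlt : l < h) :
    IsLyndon (l ++ h) := by
  have hlh : l ++ h < h := by
    rcases letterLT_or_prefix_of_lt hlt with h' | ⟨w, hw, e⟩
    · exact h' h
    · have := (append_lt_append_left_iff l).2 (hh.2 l w hl.1 hw e)
      rwa [← e] at this
  refine ⟨by simp [hl.1], fun v w hv hw e => ?_⟩
  rcases List.append_eq_append_iff.1 e with ⟨s, rfl, hs⟩ | ⟨s, hs, rfl⟩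
  · rcases eq_or_ne s [] with rfl | hs0
    · rw [List.nil_append] at hs
      exact hs ▸ hlh
    · exact lt_trans hlh (hh.2 s w hs0 hw hs)
  · rcases eq_or_ne s [] with rfl | hs0
    · exact hlh
    · have hlen : s.length ≤ l.length := by simp [hs]
      exact ((letterLT_of_lt_of_length_le (hl.2 v s hv hs0 hs) hlen).append_right h) h

theorem exists_factorization_append {l : List X} (hl : IsLyndon l) (ls : List (List X))
    {v : List X} (hv : IsLyndonFactorization ls v) :
    ∃ ls', IsLyndonFactorization ls' (l ++ v) := by
  induction ls generalizing l v with
  | nil =>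
    obtain ⟨-, -, rfl⟩ := hv
    exact ⟨[l], by simpa using hl, List.isChain_singleton _, rfl⟩
  | cons h t ih =>
    obtain ⟨h₁, h₂, rfl⟩ := hv
    by_cases hlt : l < h
    · obtain ⟨ls', h'⟩ := ih (isLyndon_append hl (h₁ h List.mem_cons_self) hlt)
        ⟨fun l hl => h₁ l (List.mem_cons_of_mem _ hl), h₂.tail, rfl⟩
      exact ⟨ls', by simpa using h'⟩
    · exact ⟨l :: h :: t, List.forall_mem_cons.2 ⟨hl, h₁⟩, List.isChain_cons_cons.2 ⟨hlt, h₂⟩, rfl⟩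

/-- Every word has a Lyndon factorization. -/
theorem exists_factorization (v : List X) : ∃ ls, IsLyndonFactorization ls v := by
  induction v with
  | nil => exact ⟨[], by simp, List.isChain_nil, rfl⟩
  | cons x v ih =>
    obtain ⟨ls, hls⟩ := ih
    refine exists_factorization_append (l := [x]) ⟨by simp, fun v w hv hw e => ?_⟩ ls hls
    have := congrArg List.length e
    have := List.length_pos_iff.2 hv
    have := List.length_pos_iff.2 hw
    simp only [List.length_append, List.length_singleton] at *
    omega

theorem muchGt_of_letterLT {u v : List X} (hu : IsLyndon u) {n : ℕ}
    (h : LetterLT (List.replicate n u).flatten v) : MuchGt v u := by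
  obtain ⟨ls, hls⟩ := exists_factorization v
  cases ls with
  | nil =>
    obtain ⟨-, -, rfl⟩ := hls
    exact absurd h LetterLT.not_nil_right
  | cons l t =>
    refine ⟨l, t, hls, ?_⟩
    by_contra hlt
    obtain ⟨-, hc, rfl⟩ := hls
    have hc' : (l :: t).IsChain (· ≥ ·) := hc.imp fun _ _ hab => not_lt.1 hab
    have hlu : l ≤ u := not_lt.1 hlt
    refine not_letterLT_flatten_of_forall_le hu (l :: t) ?_ n (List.append_nil u).symm h
    exact List.forall_mem_cons.2
      ⟨hlu, fun m hm => (List.rel_of_pairwise_cons hc'.pairwise hm : l ≥ m).trans hlu⟩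

end LyndonWord

open LyndonWord in
/-- If `u` is a Lyndon word, `i ≥ 1`, `a` is a word of length `i·l(u)` with `a ≥ u^i`
lexicographically, and `b ≫ u`, then `a ++ b ≫ u`. -/
theorem muchGt_pow_append {X : Type*} [Fintype X] [LinearOrder X]
    (u : List X) (hu : IsLyndon u) (i : ℕ) (hi : 0 < i)
    (a : List X) (ha : a.length = i * u.length)
    (hge : a = (List.replicate i u).flatten ∨
      List.Lex (· < ·) (List.replicate i u).flatten a)
    (b : List X) (hb : MuchGt b u) :
    MuchGt (a ++ b) u := by
  have hab : ∃ n, LetterLT (List.replicate n u).flatten (a ++ b) := by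
    rcases hge with rfl | hlt
    · obtain ⟨n, hn⟩ := exists_letterLT_of_muchGt hu.1 hb
      refine ⟨i + n, ?_⟩
      rw [List.replicate_add, List.flatten_append]
      exact (LetterLT.append_left_iff _).2 hn
    · exact ⟨i, (letterLT_of_lt_of_length_le hlt (by simp [ha])).append_right b⟩
  obtain ⟨n, hn⟩ := hab
  exact muchGt_of_letterLT hu hn
end
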